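/- arXiv:1909.07802 — 3 statements merged into one kernel-verified Lean document; each statement's English description precedes it below -/
import Mathlib

section
/- Let δ ∈ K satisfy N(δ) = 1. Then the Lunardon–Polverino binomial f(x) = x^σ + δ·x^(σ^(n−1)) is not scattered; that is, there exist nonzero x, t ∈ K with x·f(t) = t·f(x) such that there is no c ∈ K with c^q = c and x = c·t. -/
/-!
Write `φ` for the `q^s`-power automorphism of `K` and `τ = φ^(n-1) = φ⁻¹`. For `x, t : K` put
`W = x * φ t - t * φ x`. Since `τ W = t * τ x - x * τ t`, the equation `x * f t = t * f x` says
exactly that `W = δ * τ W`.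

* As `N(δ) = 1` and `s` is coprime to `n`, some nonzero `W` satisfies `W = δ * τ W`
  (multiplicative Hilbert 90, here read off from the cyclic group `Kˣ`:
  `exists_eq_pow_of_pow_div_eq_one`).
* With `x = m * t`, the value of `x * φ t - t * φ x` is `t * φ t * (m - φ m)`. To make it equal
  to `W`, one needs `m - φ m = W / (t * φ t)`, which is solvable as soon as
  the right-hand side has trace zero over `F_q` (additive Hilbert 90, `exists_sub_pow_eq`).
* `r ↦ Tr (W * r * φ r)` is a quadratic form over `F_q` in `n ≥ 3` variables, so by
  Chevalley–Warning it has a nontrivial zero `r` (`exists_ne_zero_apply_self_eq_zero`);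
  take `t = r⁻¹`.

Finally `m` is not fixed by the `q`-power map, because otherwise `m - φ m = 0` and `W = 0`.
-/

/-- A quadratic form in at least three variables over a finite field is isotropic
(Chevalley–Warning); the form is given here as the diagonal of a bilinear map. -/
theorem exists_ne_zero_apply_self_eq_zero {F V : Type*} [Field F] [Fintype F] [AddCommGroup V]
    [Module F V] [FiniteDimensional F V] (B : V →ₗ[F] V →ₗ[F] F)
    (hV : 3 ≤ Module.finrank F V) : ∃ x : V, x ≠ 0 ∧ B x x = 0 := by
  classical
  let b := Module.finBasis F V
  let ι := Fin (Module.finrank F V)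
  let f : MvPolynomial ι F :=
    ∑ i, ∑ j, MvPolynomial.C (B (b i) (b j)) * (MvPolynomial.X i * MvPolynomial.X j)
  have hdeg : f.totalDegree ≤ 2 := by
    refine (MvPolynomial.totalDegree_finsetSum_le fun i _ ↦
      MvPolynomial.totalDegree_finsetSum_le fun j _ ↦ ?_)
    refine (MvPolynomial.totalDegree_mul _ _).trans ?_
    have := MvPolynomial.totalDegree_mul (MvPolynomial.X i : MvPolynomial ι F) (MvPolynomial.X j)
    simp only [MvPolynomial.totalDegree_X, MvPolynomial.totalDegree_C] at this ⊢
    omega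
  have heval (x : ι → F) : MvPolynomial.eval x f = B (∑ i, x i • b i) (∑ i, x i • b i) := by
    simp only [f, map_sum, map_mul, MvPolynomial.eval_C, MvPolynomial.eval_X, LinearMap.sum_apply,
      map_smul, LinearMap.smul_apply, smul_eq_mul, Finset.mul_sum]
    rw [Finset.sum_comm]
    refine Finset.sum_congr rfl fun i _ ↦ Finset.sum_congr rfl fun j _ ↦ by ring
  obtain ⟨p, hp⟩ := CharP.exists F
  have hpp : p.Prime := CharP.char_is_prime F p
  have hdvd := char_dvd_card_solutions p (f := f) (by simp only [ι, Fintype.card_fin]; omega)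
  let z : {x : ι → F // MvPolynomial.eval x f = 0} := ⟨0, by rw [heval]; simp⟩
  have hcard := Nat.le_of_dvd (Fintype.card_pos_iff.2 ⟨z⟩) hdvd
  obtain ⟨y, hy⟩ := Fintype.exists_ne_of_one_lt_card (hpp.one_lt.trans_le hcard) z
  refine ⟨∑ i, y.1 i • b i, fun h ↦ hy (Subtype.ext (funext fun i ↦ ?_)), heval y.1 ▸ y.2⟩
  exact Fintype.linearIndependent_iff.1 b.linearIndependent y.1 h i

/-- If `x ^ (q ^ s) = x` in a field with `q ^ n` elements and `s` is coprime to `n`, then already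
`x ^ q = x`. -/
theorem pow_eq_self_of_coprime {K : Type*} [Field K] [Fintype K] {q n s : ℕ} (hq : 0 < q)
    (hsn : Nat.Coprime s n) (hK : Fintype.card K = q ^ n) {x : K} (hx : x ^ q ^ s = x) :
    x ^ q = x := by
  rcases eq_or_ne x 0 with rfl | h0
  · simp [hq.ne']
  have key (m : ℕ) (h : x ^ q ^ m = x) : x ^ (q ^ m - 1) = 1 := by
    apply mul_left_cancel₀ h0
    rw [mul_one, ← pow_succ', Nat.sub_add_cancel (Nat.one_le_pow _ _ hq), h]
  have h1 : orderOf x ∣ q - 1 := by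
    have := Nat.dvd_gcd (orderOf_dvd_of_pow_eq_one (key s hx))
      (orderOf_dvd_of_pow_eq_one (key n (by rw [← hK]; exact FiniteField.pow_card x)))
    rwa [Nat.pow_sub_one_gcd_pow_sub_one, hsn.gcd_eq_one, pow_one] at this
  have h2 := orderOf_dvd_iff_pow_eq_one.1 h1
  calc x ^ q = x ^ (q - 1 + 1) := by rw [Nat.sub_add_cancel hq]
    _ = x := by rw [pow_succ, h2, one_mul]

/-- Additive Hilbert 90 for the generator `x ↦ x ^ (q ^ s)` of the Galois group of a
finite field extension. -/
theorem exists_sub_pow_eq {F K : Type*} [Field F] [Fintype F] [Field K] [Fintype K] [Algebra F K]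
    {s : ℕ} (hs : Nat.Coprime s (Module.finrank F K)) {y : K} (hy : Algebra.trace F K y = 0) :
    ∃ m : K, m - m ^ Fintype.card F ^ s = y := by
  let g : K ≃ₐ[F] K := FiniteField.frobeniusAlgEquivOfAlgebraic F K ^ s
  have hg (x : K) : g x = x ^ Fintype.card F ^ s := by
    simp only [g, AlgEquiv.coe_pow, FiniteField.coe_frobeniusAlgEquivOfAlgebraic_iterate]
  let L : K →ₗ[F] K := LinearMap.id - g.toLinearMap
  have hL (x : K) : L x = x - x ^ Fintype.card F ^ s := by
    rw [← hg]; rfl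
  have hcard : Fintype.card K = Fintype.card F ^ Module.finrank F K := Module.card_eq_pow_finrank
  have hker : LinearMap.ker L ≤ Submodule.span F {1} := by
    intro x hx
    rw [LinearMap.mem_ker, hL, sub_eq_zero] at hx
    have hxq := pow_eq_self_of_coprime Fintype.card_pos hs hcard hx.symm
    have hbot : x ∈ (⊥ : IntermediateField F K) := by
      refine (IsGalois.mem_bot_iff_fixed x).2 fun σ ↦ ?_
      obtain ⟨i, rfl⟩ := (FiniteField.bijective_frobeniusAlgEquivOfAlgebraic_pow F K).2 σ
      simp only [AlgEquiv.coe_pow]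
      exact Function.iterate_fixed hxq i
    obtain ⟨a, rfl⟩ := IntermediateField.mem_bot.1 hbot
    exact Submodule.mem_span_singleton.2 ⟨a, (Algebra.algebraMap_eq_smul_one a).symm⟩
  have hrange : LinearMap.range L ≤ LinearMap.ker (Algebra.trace F K) := by
    rintro _ ⟨x, rfl⟩
    rw [LinearMap.mem_ker]
    change Algebra.trace F K (x - g x) = 0
    rw [map_sub, Algebra.trace_eq_of_algEquiv, sub_self]
  have h1 := LinearMap.finrank_range_add_finrank_ker L
  have h2 := LinearMap.finrank_range_add_finrank_ker (Algebra.trace F K)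
  have h3 : Module.finrank F (LinearMap.range (Algebra.trace F K)) = 1 := by
    rw [LinearMap.range_eq_top.2 (Algebra.trace_surjective F K), finrank_top, Module.finrank_self]
  have h4 : Module.finrank F (LinearMap.ker L) ≤ 1 :=
    (Submodule.finrank_mono hker).trans (finrank_span_singleton one_ne_zero).le
  have heq := Submodule.eq_of_le_of_finrank_le hrange (by omega)
  obtain ⟨m, hm⟩ : y ∈ LinearMap.range L := heq ▸ hy
  exact ⟨m, hL m ▸ hm⟩

/-- In a finite cyclic group of order `N`, an element killed by `N / gcd(M, N)` is an `M`-th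
power. -/
theorem exists_eq_pow_of_pow_div_eq_one {G : Type*} [Group G] [Finite G] [IsCyclic G] (M : ℕ)
    {x : G} (hx : x ^ (Nat.card G / Nat.gcd M (Nat.card G)) = 1) : ∃ w : G, w ^ M = x := by
  obtain ⟨g, hg⟩ := IsCyclic.exists_monoid_generator (α := G)
  obtain ⟨k, rfl⟩ := hg x
  have hord : orderOf g = Nat.card G :=
    orderOf_eq_card_of_forall_mem_zpowers fun y ↦ by
      obtain ⟨j, rfl⟩ := hg y
      exact ⟨j, zpow_natCast g j⟩
  set N := Nat.card G with hN
  have hNpos : 0 < N := Nat.card_pos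
  set d := Nat.gcd M N with hd
  have hdN : d ∣ N := Nat.gcd_dvd_right _ _
  have hdk : d ∣ k := by
    change (g ^ k) ^ _ = 1 at hx
    rw [← pow_mul] at hx
    have h := orderOf_dvd_of_pow_eq_one hx
    rw [hord] at h
    have hpos : 0 < N / d := Nat.div_pos (Nat.le_of_dvd hNpos hdN) (Nat.pos_of_dvd_of_pos hdN hNpos)
    refine Nat.dvd_of_mul_dvd_mul_right hpos ?_
    rwa [Nat.mul_div_cancel' hdN]
  obtain ⟨c, rfl⟩ := hdk
  refine ⟨g ^ (Nat.gcdA M N * c), ?_⟩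
  have hb := Nat.gcd_eq_gcd_ab M N
  rw [← hd] at hb
  have hgN : g ^ (N : ℤ) = 1 := by rw [zpow_natCast, ← hord, pow_orderOf_eq_one]
  change _ = g ^ (d * c)
  rw [← zpow_natCast, ← zpow_natCast g, ← zpow_mul]
  have : ((d * c : ℕ) : ℤ) = Nat.gcdA M N * c * M + N * (Nat.gcdB M N * c) := by
    push_cast; rw [hb]; ring
  rw [this, zpow_add, zpow_mul g N, hgN, one_zpow, mul_one]

/-- If `N(δ) = 1` then `W = δ * W ^ (q ^ m)` has a nonzero solution, for every `m` coprime
to `n`. -/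
theorem exists_eq_mul_pow {K : Type*} [Field K] [Fintype K] {q n m : ℕ} (hq : 1 < q)
    (hmn : Nat.Coprime m n) (hK : Fintype.card K = q ^ n) {δ : K} (hδ0 : δ ≠ 0)
    (hδ : δ ^ ((q ^ n - 1) / (q - 1)) = 1) :
    ∃ W : K, W ≠ 0 ∧ W = δ * W ^ q ^ m := by
  have hcard : Nat.card Kˣ = q ^ n - 1 := by rw [Nat.card_units, Nat.card_eq_fintype_card, hK]
  have hgcd : Nat.gcd (q ^ m - 1) (Nat.card Kˣ) = q - 1 := by
    rw [hcard, Nat.pow_sub_one_gcd_pow_sub_one, hmn.gcd_eq_one, pow_one]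
  obtain ⟨w, hw⟩ := exists_eq_pow_of_pow_div_eq_one (q ^ m - 1) (x := (Units.mk0 δ hδ0)⁻¹) (by
    rw [hgcd, hcard, inv_pow, inv_eq_one]
    ext
    simpa using hδ)
  refine ⟨w, w.ne_zero, ?_⟩
  have hw' : (w : K) ^ (q ^ m - 1) = δ⁻¹ := by simpa using congrArg Units.val hw
  rw [← Nat.sub_add_cancel (Nat.one_le_pow m q (by omega)), pow_succ, hw', ← mul_assoc,
    mul_inv_cancel₀ hδ0, one_mul]

/-- The result with `F_q` given as a field `F` over which `K` is an algebra. -/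
theorem exists_not_scattered {F K : Type*} [Field F] [Fintype F] [Field K] [Fintype K]
    [Algebra F K] {q n s : ℕ} (hF : Fintype.card F = q) (hn : 3 ≤ n)
    (hsn : Nat.Coprime s n) (hK : Fintype.card K = q ^ n) {δ : K}
    (hδ : δ ^ ((q ^ n - 1) / (q - 1)) = 1) :
    ∃ x t : K, x ≠ 0 ∧ t ≠ 0 ∧
      x * (t ^ (q ^ s) + δ * t ^ ((q ^ s) ^ (n - 1))) =
        t * (x ^ (q ^ s) + δ * x ^ ((q ^ s) ^ (n - 1))) ∧
      ¬∃ c : K, c ^ q = c ∧ x = c * t := by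
  have hq : 1 < q := hF ▸ Fintype.one_lt_card
  have hfr : Module.finrank F K = n := by
    have : Fintype.card K = Fintype.card F ^ Module.finrank F K := Module.card_eq_pow_finrank
    rw [hF, hK] at this
    exact (Nat.pow_right_injective hq this).symm
  have hcop : Nat.Coprime (s * (n - 1)) n := by
    refine Nat.Coprime.mul_left hsn ?_
    have := (Nat.coprime_self_add_right (m := n - 1) (n := 1)).2 (Nat.coprime_one_right _)
    rwa [Nat.sub_add_cancel (by omega)] at this
  have hδ0 : δ ≠ 0 := by
    rintro rfl
    have : (q ^ n - 1) / (q - 1) ≠ 0 := by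
      refine (Nat.div_pos (Nat.sub_le_sub_right ?_ 1) (by omega)).ne'
      exact Nat.le_self_pow (by omega) q
    simp [this] at hδ
  obtain ⟨W, hW0, hW⟩ := exists_eq_mul_pow hq hcop hK hδ0 hδ
  let φ : K ≃ₐ[F] K := FiniteField.frobeniusAlgEquivOfAlgebraic F K ^ s
  let τ : K ≃ₐ[F] K := FiniteField.frobeniusAlgEquivOfAlgebraic F K ^ (s * (n - 1))
  have hφ (x : K) : φ x = x ^ q ^ s := by
    simp only [φ, AlgEquiv.coe_pow, FiniteField.coe_frobeniusAlgEquivOfAlgebraic_iterate, hF]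
  have hτ (x : K) : τ x = x ^ q ^ (s * (n - 1)) := by
    simp only [τ, AlgEquiv.coe_pow, FiniteField.coe_frobeniusAlgEquivOfAlgebraic_iterate, hF]
  have hτφ (x : K) : τ (φ x) = x := by
    rw [hφ, hτ, ← pow_mul, ← pow_add, show s + s * (n - 1) = n * s by
      rw [← mul_one_add, Nat.add_sub_cancel' (by omega), mul_comm], pow_mul, ← hK]
    exact FiniteField.pow_card_pow s x
  rw [← hτ] at hW
  obtain ⟨r, hr0, hr⟩ := exists_ne_zero_apply_self_eq_zero
    (((LinearMap.mul F K).compl₂ φ.toLinearMap).compr₂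
      (Algebra.trace F K ∘ₗ LinearMap.mulLeft F W)) (by omega)
  have hr' : Algebra.trace F K (W * (r * φ r)) = 0 := hr
  obtain ⟨m, hm⟩ := exists_sub_pow_eq (s := s) (hfr ▸ hsn) hr'
  rw [hF, ← hφ] at hm
  have hφr : φ r ≠ 0 := by simpa using hr0
  have hm0 : m ≠ 0 := by
    rintro rfl
    rw [map_zero, sub_zero] at hm
    exact mul_ne_zero hW0 (mul_ne_zero hr0 hφr) hm.symm
  refine ⟨m * r⁻¹, r⁻¹, mul_ne_zero hm0 (inv_ne_zero hr0), inv_ne_zero hr0, ?_, ?_⟩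
  · rw [← pow_mul, ← hφ, ← hφ, ← hτ, ← hτ]
    have hWx : W = m * r⁻¹ * φ r⁻¹ - r⁻¹ * φ (m * r⁻¹) := by
      rw [map_mul, map_inv₀]
      field_simp
      linear_combination -hm
    have hWτ : τ W = τ (m * r⁻¹) * r⁻¹ - τ r⁻¹ * (m * r⁻¹) := by
      conv_lhs => rw [hWx]
      rw [map_sub, map_mul τ (m * r⁻¹) (φ r⁻¹), map_mul τ r⁻¹, hτφ, hτφ]
    linear_combination hW - hWx + δ * hWτ
  · rintro ⟨c, hc, hct⟩
    obtain rfl : m = c := mul_right_cancel₀ (inv_ne_zero hr0) hct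
    have hfix : φ m = m := by
      rw [hφ]
      simpa only [pow_iterate] using Function.iterate_fixed (f := (· ^ q)) hc s
    rw [hfix, sub_self] at hm
    exact mul_ne_zero hW0 (mul_ne_zero hr0 hφr) hm.symm

/-- If `N(δ) = 1`, the Lunardon–Polverino binomial `x ↦ x^σ + δ x^(σ^(n-1))`
is not scattered. -/
theorem stmt_0 (q n s : ℕ) (hq : IsPrimePow q) (hn : 3 ≤ n) (hs : 0 < s)
    (hsn : Nat.Coprime s n) (K : Type*) [Field K] [Fintype K]
    (hK : Fintype.card K = q ^ n) (δ : K)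
    (hδ : δ ^ ((q ^ n - 1) / (q - 1)) = 1) :
    ∃ x t : K, x ≠ 0 ∧ t ≠ 0 ∧
      x * (t ^ (q ^ s) + δ * t ^ ((q ^ s) ^ (n - 1))) =
        t * (x ^ (q ^ s) + δ * x ^ ((q ^ s) ^ (n - 1))) ∧
      ¬∃ c : K, c ^ q = c ∧ x = c * t := by
  obtain ⟨p, k, hp, hk, rfl⟩ := (isPrimePow_nat_iff q).1 hq
  have : Fact p.Prime := ⟨hp⟩
  have : CharP K p := by
    obtain ⟨p', hp'⟩ := CharP.exists K
    obtain ⟨j, hp'p, hj⟩ := FiniteField.card K p'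
    have hdvd : p' ∣ (p ^ k) ^ n := by
      rw [← hK, hj]
      exact dvd_pow_self _ j.ne_zero
    obtain rfl := (Nat.prime_dvd_prime_iff_eq hp'p hp).1
      (hp'p.dvd_of_dvd_pow (hp'p.dvd_of_dvd_pow hdvd))
    exact hp'
  let _ : Algebra (ZMod p) K := ZMod.algebra K p
  have hfr : Module.finrank (ZMod p) K = k * n := by
    have h := FiniteField.pow_finrank_eq_card p K
    rw [hK, ← pow_mul] at h
    exact Nat.pow_right_injective hp.two_le h
  obtain ⟨e⟩ := FiniteField.nonempty_algHom_of_finrank_dvd (F := ZMod p) (K := GaloisField p k)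
    (L := K) (by rw [GaloisField.finrank p hk.ne', hfr]; exact dvd_mul_right k n)
  let _ : Algebra (GaloisField p k) K := e.toRingHom.toAlgebra
  let _ : Fintype (GaloisField p k) := Fintype.ofFinite _
  exact exists_not_scattered (F := GaloisField p k)
    (by rw [Fintype.card_eq_nat_card, GaloisField.card p k hk.ne']) hn hsn hK hδ
end

section
/- Let b ∈ K be nonzero and let f(x) = x^σ + b·x^(σ²). Then f is scattered if and only if there is no nonzero x ∈ K such that ∑_{i=0}^{n−1} w^(e_i) = 0, where w = −(1 + b^(−1)·x^σ·x^(−σ²)) (i.e., w = −(b·x^(σ²) + x^σ)/(b·x^(σ²))) and e_i = ∑_{j=0}^{i−1} σ^j. -/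
/-!
Write `σ = q ^ s`, so that `φ x = x ^ σ` generates `Gal(K / 𝔽_q)`. For `x = l * t`, the equation
`x * f t = t * f x` becomes, with `m = φ l - l`, the equation `φ m = w t * m`, where
`w t = -(1 + b⁻¹ t ^ σ t ^ (-σ²))`; moreover `m = 0` exactly when `l ^ q = l`. From `φ m = w m` one
gets `φ^i m = w ^ (e i) * m`, hence `m * ∑ w ^ (e i)` is the trace of `m`. So `f` fails to be
scattered iff for some `t ≠ 0` there is `m ≠ 0` of the form `φ l - l` with `φ m = w t * m`.

If such an `m` exists, its trace vanishes, so `∑ w ^ (e i) = 0`. Conversely, suppose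
`∑ w ^ (e i) = 0`. Applying `φ` and multiplying by `w` shifts the sum by one index, so
`w ^ (e n) = 1`, that is, `w` has norm one. Multiplicative Hilbert 90 (`exists_pow_eq_mul`) gives
`m ≠ 0` with `φ m = w m`; its trace vanishes, so additive Hilbert 90 (`exists_pow_sub_eq`) gives `l`.
Both forms of Hilbert 90 are proved by the classical explicit formulas, from the linear independence
of the distinct characters `x ↦ x ^ (σ ^ i)`, `i < n`.
-/

/-- Fixed points of the powers `q ^ a` and `q ^ b` are fixed points of the power `q ^ gcd a b`. -/
lemma pow_gcd_fixed {K : Type*} [Monoid K] {q a b : ℕ} {x : K}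
    (ha : x ^ q ^ a = x) (hb : x ^ q ^ b = x) : x ^ q ^ (a.gcd b) = x := by
  have key : ∀ m, (fun y : K => y ^ q)^[m] x = x ^ q ^ m := fun m => by
    rw [pow_iterate]
  have h := Function.IsPeriodicPt.gcd (f := fun y : K => y ^ q) (x := x) (m := a) (n := b)
    ((key a).trans ha) ((key b).trans hb)
  exact (key _).symm.trans h

/-- For `d < n`, the power map `x ↦ x ^ q ^ d` moves some element of a field of order `q ^ n`: a
generator of the multiplicative group has order `q ^ n - 1`. -/
lemma exists_pow_ne {K : Type*} [Field K] [Fintype K] {q n d : ℕ} (hq : 1 < q)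
    (hK : Fintype.card K = q ^ n) (hd : 0 < d) (hdn : d < n) : ∃ x : K, x ^ q ^ d ≠ x := by
  classical
  by_contra! h
  obtain ⟨g, hg⟩ := IsCyclic.exists_ofOrder_eq_natCard (α := Kˣ)
  rw [Nat.card_eq_fintype_card, Fintype.card_units, hK] at hg
  have h1 : 1 < q ^ d := Nat.one_lt_pow hd.ne' hq
  have h2 : q ^ d < q ^ n := Nat.pow_lt_pow_right hq hdn
  have h3 : g ^ (q ^ d - 1) = 1 := by
    have h4 : g ^ (q ^ d - 1) * g = 1 * g := by
      rw [← pow_succ, Nat.sub_add_cancel h1.le, one_mul]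
      ext
      simpa using h g
    exact mul_right_cancel h4
  have h5 := Nat.le_of_dvd (by omega) (orderOf_dvd_of_pow_eq_one h3)
  omega

section

variable {K : Type*} [Field K] {S n : ℕ}

/-- Independence of characters for the power maps `x ↦ x ^ (S ^ i)`, `i < n`. -/
lemma exists_sum_ne_zero (hn : 0 < n)
    (hdist : ∀ i < n, ∀ j < n, (∀ x : K, x ^ S ^ i = x ^ S ^ j) → i = j)
    (c : ℕ → K) (hc : c 0 ≠ 0) :
    ∃ y : K, ∑ i ∈ Finset.range n, c i * y ^ S ^ i ≠ 0 := by
  by_contra! h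
  have hinj : Function.Injective (fun i : Fin n => (powMonoidHom (S ^ (i : ℕ)) : K →* K)) := by
    intro i j hij
    exact Fin.ext (hdist i i.2 j j.2 fun x => DFunLike.congr_fun hij x)
  have hli := (linearIndependent_monoidHom K K).comp _ hinj
  rw [Fintype.linearIndependent_iff] at hli
  refine hc (hli (fun i => c i) ?_ ⟨0, hn⟩)
  ext y
  have := h y
  rw [Finset.sum_range] at this
  simpa using this

/-- The recursion `e (i + 1) = S * e i + 1` for the exponents `e i = 1 + S + ⋯ + S ^ (i - 1)`. -/
lemma exponent_succ (i : ℕ) :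
    ∑ j ∈ Finset.range (i + 1), S ^ j = (∑ j ∈ Finset.range i, S ^ j) * S + 1 := by
  rw [Finset.sum_range_succ', Finset.sum_mul]
  simp [pow_succ]

lemma pow_pow_eq_mul {w m : K} (h : m ^ S = w * m) (i : ℕ) :
    m ^ S ^ i = w ^ (∑ j ∈ Finset.range i, S ^ j) * m := by
  induction i with
  | zero => simp
  | succ i ih => rw [pow_succ, pow_mul, ih, mul_pow, h, exponent_succ, pow_succ, pow_mul]; ring

variable (φ : K →+* K) (hφ : ∀ x, φ x = x ^ S)
include hφ

/-- Vanishing of `∑ w ^ (e i)` forces `w` to have norm one: `w * φ (w ^ e i) = w ^ e (i + 1)`. -/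
lemma norm_eq_one {w : K}
    (h : ∑ i ∈ Finset.range n, w ^ (∑ j ∈ Finset.range i, S ^ j) = 0) :
    w ^ (∑ j ∈ Finset.range n, S ^ j) = 1 := by
  have h1 : ∑ i ∈ Finset.range n, w ^ (∑ j ∈ Finset.range (i + 1), S ^ j) = 0 := by
    have h2 := congrArg (fun y => φ y * w) h
    simp only [map_sum, map_zero, zero_mul, Finset.sum_mul] at h2
    simp only [hφ] at h2
    simpa only [exponent_succ, pow_succ, pow_mul, pow_zero, one_mul] using h2
  have h3 := Finset.sum_range_succ' (fun i => w ^ (∑ j ∈ Finset.range i, S ^ j)) n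
  rw [Finset.sum_range_succ, h, h1] at h3
  simpa using h3

variable (hn : 0 < n) (hper : ∀ x : K, x ^ S ^ n = x)
  (hdist : ∀ i < n, ∀ j < n, (∀ x : K, x ^ S ^ i = x ^ S ^ j) → i = j)
include hn hper hdist

/-- Multiplicative Hilbert 90, with the norm of `w` written as a power of `w`. -/
lemma exists_pow_eq_mul {w : K} (hw : w ^ (∑ j ∈ Finset.range n, S ^ j) = 1) :
    ∃ m : K, m ≠ 0 ∧ m ^ S = w * m := by
  obtain ⟨y, hy⟩ := exists_sum_ne_zero hn hdist
    (fun i => w ^ (∑ j ∈ Finset.range i, S ^ j)) (by simp)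
  -- The Lagrange resolvent `B` of `y` satisfies `φ B * w = B`, so `B⁻¹` is a solution.
  set B := ∑ i ∈ Finset.range n, w ^ (∑ j ∈ Finset.range i, S ^ j) * y ^ S ^ i with hB
  have h1 : B ^ S * w = B := by
    have h2 : B ^ S * w =
        ∑ i ∈ Finset.range n, w ^ (∑ j ∈ Finset.range (i + 1), S ^ j) * y ^ S ^ (i + 1) := by
      rw [← hφ, hB, map_sum, Finset.sum_mul]
      refine Finset.sum_congr rfl fun i _ => ?_
      rw [hφ, exponent_succ, mul_pow, pow_succ w, pow_mul, pow_succ S, pow_mul]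
      ring
    have h3 := Finset.sum_range_succ'
      (fun i => w ^ (∑ j ∈ Finset.range i, S ^ j) * y ^ S ^ i) n
    rw [Finset.sum_range_succ, ← h2, ← hB, hw, hper] at h3
    simpa using h3.symm
  refine ⟨B⁻¹, inv_ne_zero hy, ?_⟩
  have h4 : B ^ S ≠ 0 := pow_ne_zero _ hy
  rw [inv_pow]
  field_simp
  linear_combination -h1

/-- Additive Hilbert 90. -/
lemma exists_pow_sub_eq {m : K} (hm : ∑ i ∈ Finset.range n, m ^ S ^ i = 0) :
    ∃ l : K, l ^ S - l = m := by
  obtain ⟨y, hy⟩ := exists_sum_ne_zero hn hdist (fun _ => (1 : K)) one_ne_zero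
  simp only [one_mul] at hy
  -- `T` is the trace of `y`, hence fixed by `φ`, and `L` satisfies `φ L = L - m * T`.
  set T := ∑ i ∈ Finset.range n, y ^ S ^ i with hT
  have hTs : ∑ i ∈ Finset.range n, y ^ S ^ (i + 1) = T := by
    have h3 := Finset.sum_range_succ' (fun i => y ^ S ^ i) n
    rw [Finset.sum_range_succ, ← hT, hper] at h3
    simpa using h3.symm
  have hTφ : φ T = T := by
    rw [hT, map_sum]
    simpa only [hφ, ← pow_mul, ← pow_succ] using hTs
  set L := ∑ i ∈ Finset.range n, (∑ j ∈ Finset.range i, m ^ S ^ j) * y ^ S ^ i with hL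
  have hLφ : φ L = L - m * T := by
    have h2 : φ L + m * T = ∑ i ∈ Finset.range n,
        (∑ j ∈ Finset.range (i + 1), m ^ S ^ j) * y ^ S ^ (i + 1) := by
      rw [← hTs, hL, map_sum, Finset.mul_sum, ← Finset.sum_add_distrib]
      refine Finset.sum_congr rfl fun i _ => ?_
      rw [map_mul, map_sum, Finset.sum_range_succ']
      simp only [hφ, ← pow_mul, ← pow_succ, pow_zero, pow_one]
      ring
    have h3 := Finset.sum_range_succ'
      (fun i => (∑ j ∈ Finset.range i, m ^ S ^ j) * y ^ S ^ i) n
    rw [Finset.sum_range_succ, ← h2, ← hL, hm] at h3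
    simp only [zero_mul, add_zero, Finset.range_zero, Finset.sum_empty] at h3
    exact eq_sub_of_add_eq h3.symm
  refine ⟨-(L / T), ?_⟩
  rw [← hφ, map_neg, map_div₀, hTφ, hLφ]
  field_simp
  ring

end

/-- With `x = l * t` and `m = l ^ S - l`, the collision equation `x * f t = t * f x` reads
`m ^ S = w t * m`. -/
lemma collision_iff {K : Type*} [Field K] {S : ℕ} (φ : K →+* K) (hφ : ∀ x, φ x = x ^ S)
    {b : K} (hb : b ≠ 0) (l : K) {t : K} (ht : t ≠ 0) :
    (l * t) * (t ^ S + b * t ^ S ^ 2) = t * ((l * t) ^ S + b * (l * t) ^ S ^ 2) ↔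
      (l ^ S - l) ^ S = (-(1 + b⁻¹ * t ^ S * (t ^ S ^ 2)⁻¹)) * (l ^ S - l) := by
  have h1 : (l ^ S - l) ^ S = l ^ S ^ 2 - l ^ S := by
    rw [← hφ, map_sub, hφ, hφ, ← pow_mul, ← sq]
  have h2 : t ^ S ^ 2 ≠ 0 := pow_ne_zero _ ht
  rw [h1, mul_pow, mul_pow, ← sub_eq_zero, ← sub_eq_zero (b := _ * (l ^ S - l))]
  have h3 : l * t * (t ^ S + b * t ^ S ^ 2) - t * (l ^ S * t ^ S + b * (l ^ S ^ 2 * t ^ S ^ 2)) =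
      -(t * b * t ^ S ^ 2) *
        (l ^ S ^ 2 - l ^ S - -(1 + b⁻¹ * t ^ S * (t ^ S ^ 2)⁻¹) * (l ^ S - l)) := by
    field_simp
    ring
  rw [h3, mul_eq_zero, or_iff_right]
  exact neg_ne_zero.2 (mul_ne_zero (mul_ne_zero ht hb) h2)

/-- `f(x) = x^σ + b x^(σ²)` is scattered iff there is no nonzero `x` with
`∑_{i=0}^{n-1} w^{e_i} = 0`, where `w = -(1 + b⁻¹ x^σ x^(-σ²))`. -/
theorem stmt_5 (q n s : ℕ) (hq : IsPrimePow q) (hn : 3 ≤ n) (hs : 0 < s)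
    (hsn : Nat.Coprime s n) (K : Type*) [Field K] [Fintype K]
    (hK : Fintype.card K = q ^ n) (b : K) (hb : b ≠ 0) :
    (∀ x t : K, x ≠ 0 → t ≠ 0 →
      x * (t ^ (q ^ s) + b * t ^ ((q ^ s) ^ 2)) =
        t * (x ^ (q ^ s) + b * x ^ ((q ^ s) ^ 2)) →
      ∃ c : K, c ^ q = c ∧ x = c * t) ↔
    ¬∃ x : K, x ≠ 0 ∧
      ∑ i ∈ Finset.range n,
        (-(1 + b⁻¹ * x ^ (q ^ s) * (x ^ ((q ^ s) ^ 2))⁻¹)) ^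
          (∑ j ∈ Finset.range i, (q ^ s) ^ j) = 0 := by
  have hq1 : 1 < q := hq.one_lt
  have hn0 : 0 < n := by omega
  obtain ⟨φ, hφ⟩ : ∃ φ : K →+* K, ∀ x, φ x = x ^ q ^ s := by
    obtain ⟨p, k, hp, hk, rfl⟩ := hq
    have hp' : p.Prime := hp.nat_prime
    have : Fact p.Prime := ⟨hp'⟩
    have : CharP K p := by
      obtain ⟨r, hr⟩ := CharP.exists K
      obtain ⟨m, hrp, hm⟩ := FiniteField.card K r
      have h1 : r ∣ (p ^ k) ^ n := by
        rw [← hK, hm]; exact dvd_pow_self r m.ne_zero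
      rw [← pow_mul] at h1
      rwa [← (Nat.prime_dvd_prime_iff_eq hrp hp').1 (hrp.dvd_of_dvd_pow h1)]
    exact ⟨iterateFrobenius K p (k * s), fun x => by rw [iterateFrobenius_def, pow_mul]⟩
  have hqn : ∀ x : K, x ^ q ^ n = x := fun x => by rw [← hK, FiniteField.pow_card]
  have hper : ∀ x : K, x ^ (q ^ s) ^ n = x := fun x => by
    have : ∀ m, x ^ (q ^ n) ^ m = x := fun m => by
      induction m with
      | zero => simp
      | succ m ih => rw [pow_succ, pow_mul, ih, hqn]
    rw [pow_right_comm, this]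
  have hfix : ∀ x : K, x ^ q ^ s = x → x ^ q = x := fun x hx => by
    simpa [hsn.gcd_eq_one] using pow_gcd_fixed hx (hqn x)
  have hlt : ∀ i j, i < j → j < n → ¬ ∀ x : K, x ^ (q ^ s) ^ i = x ^ (q ^ s) ^ j := by
    intro i j hij hj h
    have hinj : Function.Injective (fun x : K => x ^ (q ^ s) ^ i) := by
      have h1 : (fun x : K => x ^ (q ^ s) ^ i) = φ^[i] := by
        rw [show ⇑φ = fun x => x ^ q ^ s from funext hφ, pow_iterate]
      rw [h1]
      exact φ.injective.iterate i
    -- The power `q ^ (s * (j - i))` is trivial on `K`, hence so is `q ^ gcd (s * (j - i)) n`.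
    have h2 : ∀ x : K, x ^ q ^ (s * (j - i)) = x := fun x => by
      apply hinj
      show (x ^ q ^ (s * (j - i))) ^ (q ^ s) ^ i = x ^ (q ^ s) ^ i
      rw [h x, pow_mul q, ← pow_mul x, ← pow_add, Nat.sub_add_cancel hij.le]
    have h3 : (s * (j - i)).gcd n ≤ j - i := by
      rw [Nat.Coprime.gcd_mul_left_cancel _ hsn]
      exact Nat.gcd_le_left _ (by omega)
    obtain ⟨x, hx⟩ := exists_pow_ne hq1 hK (Nat.gcd_pos_of_pos_right (s * (j - i)) hn0)
      (by omega)
    exact hx (pow_gcd_fixed (h2 x) (hqn x))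
  have hdist : ∀ i < n, ∀ j < n, (∀ x : K, x ^ (q ^ s) ^ i = x ^ (q ^ s) ^ j) → i = j := by
    intro i hi j hj h
    rcases lt_trichotomy i j with hij | hij | hij
    · exact (hlt i j hij hj h).elim
    · exact hij
    · exact (hlt j i hij hi fun x => (h x).symm).elim
  constructor
  · rintro hsc ⟨t, ht, hsum⟩
    obtain ⟨m, hm0, hm⟩ := exists_pow_eq_mul φ hφ hn0 hper hdist (norm_eq_one φ hφ hsum)
    obtain ⟨l, hl⟩ := exists_pow_sub_eq φ hφ hn0 hper hdist (m := m) (by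
      simp only [pow_pow_eq_mul hm]
      rw [← Finset.sum_mul, hsum, zero_mul])
    have hS : q ^ s ≠ 0 := pow_ne_zero _ (by omega)
    have hl0 : l ≠ 0 := by
      rintro rfl
      exact hm0 (by rw [← hl, zero_pow hS, sub_zero])
    obtain ⟨c, hc, hlc⟩ := hsc (l * t) t (mul_ne_zero hl0 ht) ht
      ((collision_iff φ hφ hb l ht).2 (by rw [hl, hm]))
    obtain rfl := mul_right_cancel₀ ht hlc
    refine hm0 ?_
    have h5 : l ^ q ^ s = l := by
      have : ∀ k, l ^ q ^ k = l := fun k => by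
        induction k with
        | zero => simp
        | succ k ih => rw [pow_succ, pow_mul, ih, hc]
      exact this s
    rw [← hl, h5, sub_self]
  · intro hno x t hx ht hxt
    obtain ⟨l, rfl⟩ : ∃ l, x = l * t := ⟨x / t, (div_mul_cancel₀ x ht).symm⟩
    refine ⟨l, ?_, rfl⟩
    by_contra hl
    have hm0 : l ^ q ^ s - l ≠ 0 := fun h => hl (hfix l (sub_eq_zero.1 h))
    have hm := (collision_iff φ hφ hb l ht).1 hxt
    refine hno ⟨t, ht, ?_⟩
    refine (mul_eq_zero.1 ?_).resolve_right hm0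
    rw [Finset.sum_mul]
    simp only [← pow_pow_eq_mul hm]
    -- The trace of `φ l - l` telescopes to `φ^n l - l = 0`.
    have h6 : ∀ i, (l ^ q ^ s - l) ^ (q ^ s) ^ i = l ^ (q ^ s) ^ (i + 1) - l ^ (q ^ s) ^ i := by
      intro i
      induction i with
      | zero => simp
      | succ i ih =>
        rw [pow_succ, pow_mul, ih, ← hφ, map_sub, hφ, hφ, ← pow_mul l, ← pow_mul l,
          ← pow_succ, ← pow_succ]
    simp only [h6]
    rw [Finset.sum_range_sub (fun i => l ^ (q ^ s) ^ i), hper]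
    simp
end

section
/- Let K be a finite field with q^5 elements and let b ∈ K be nonzero. Then the polynomial l_b(x) = x^q + b·x^(q²) is not scattered. -/
/-!
Write `xᵢ` for `x ^ (q ^ i)`, and let `F` be an algebraic closure of `K`. The failure of
scatteredness means that some polynomial `b X^(q²) + X^q - m X` with `m ∈ K` has more than `q`
roots in `K`.

Up to scaling the variable, such polynomials whose roots all lie in `K` have the form
`X^(q²) + α X^q + X`, where `α ∈ K` satisfies the pentagonal frieze relation `α₀ α₁ = α₃ + 1`: the
recurrence `z₂ = -α z₁ - z₀` and its Frobenius conjugates then force `z₅ = z₀`. The required scaling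
exists as soon as `α` has norm `1 / N(b)`, by a form of Hilbert 90. With `α₀ = u₂ / (u₁ u₃)` the
frieze relation becomes Gauss's pentagramma relation `u₀ u₂ = 1 - u₁`, and the norm of `α` becomes
the inverse of the norm of `u`. So it suffices to find, for each nonzero `d` in the field with `q`
elements, a solution `u` of the pentagramma relation of norm `d`; any solution in `F` has period
five under Frobenius, hence lies in `K`.

For a solution of the pentagramma relation, having norm `d` amounts to the point `(u, u₁)` lying on
the symmetric biquadratic curve `(1 - x)(1 - y)(x + y - 1) = d x y`. Conversely, if `(x, x₁)`
lies on this curve then so does `(x₂, x₁)`, and the equation of the curve is quadratic in `x` for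
given `y = x₁` with product of the roots `1 - y`; thus either `x₂ = x`, or `x x₂ = 1 - x₁`. If only
the first alternative ever occurred, the polynomial `(1 - X)(1 - X^q)(X + X^q - 1) - d X^(q+1)`
would have `2q + 1` distinct roots, all fixed by the square of Frobenius. But for these the trace
`x + x₁` takes at most `q` values, and the curve determines `x x₁` from the trace, so there are at
most `2q` of them (`exists_pentagramma`).
-/

open Polynomial in
theorem card_roots_of_derivative_ne_zero {F : Type*} [Field F] [IsAlgClosed F] [DecidableEq F]
    {P : F[X]} (hP : P ≠ 0) (h : ∀ x, P.eval x = 0 → P.derivative.eval x ≠ 0) :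
    P.roots.toFinset.card = P.natDegree := by
  have hnd : P.roots.Nodup := by
    rw [Multiset.nodup_iff_count_le_one]
    intro x
    rw [count_roots]
    by_contra! hx
    obtain ⟨h1, h2⟩ := (one_lt_rootMultiplicity_iff_isRoot hP).1 hx
    exact h x h1 h2
  rw [Multiset.toFinset_card_of_nodup hnd, IsAlgClosed.card_roots_eq_natDegree]

open Polynomial in
theorem mem_roots_X_pow_sub_X {F : Type*} [Field F] {q : ℕ} (hq : 1 < q) (x : F) :
    x ∈ (X ^ q - X : F[X]).roots ↔ x ^ q = x := by
  rw [mem_roots (FiniteField.X_pow_card_sub_X_ne_zero F hq)]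
  simp [sub_eq_zero]

open Polynomial in
theorem card_roots_X_pow_sub_X_le {F : Type*} [Field F] [DecidableEq F] {q : ℕ} (hq : 1 < q) :
    (X ^ q - X : F[X]).roots.toFinset.card ≤ q :=
  (Multiset.toFinset_card_le _).trans
    ((card_roots' _).trans (FiniteField.X_pow_card_sub_X_natDegree_eq F hq).le)

open Polynomial in
/-- Every nonzero `d` fixed by the `q`-Frobenius `φ` is the norm of a solution of the pentagramma
relation `u₀ u₂ = 1 - u₁`, the norm condition being expressed as membership of `(u₀, u₁)` in a
biquadratic curve. -/
theorem exists_pentagramma {F : Type*} [Field F] [IsAlgClosed F] {q : ℕ} (hq : 1 < q)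
    (hqF : (q : F) = 0) (φ : F →+* F) (hφ : ∀ x, φ x = x ^ q) (d : F) (hd : d ≠ 0)
    (hdφ : φ d = d) :
    ∃ u : F, u * φ (φ u) = 1 - φ u ∧ (1 - u) * (1 - φ u) * (u + φ u - 1) = d * u * φ u := by
  classical
  by_contra! hno
  set G : F[X] := (1 - X) * (1 - X ^ q) * (X + X ^ q - 1) - C d * X * X ^ q with hG
  have hdeg : G.natDegree = 2 * q + 1 := by
    have e : G = X ^ (2 * q + 1) + (X ^ (q + 2) - C (3 + d) * X ^ (q + 1) - X ^ 2 - X ^ (2 * q)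
        + 2 * X + 2 * X ^ q - 1) := by
      simp only [hG, map_add, C_ofNat]; ring
    have hR : (X ^ (q + 2) - C (3 + d) * X ^ (q + 1) - X ^ 2 - X ^ (2 * q)
        + 2 * X + 2 * X ^ q - 1 : F[X]).natDegree ≤ 2 * q := by
      compute_degree
      all_goals omega
    rw [e, natDegree_add_eq_left_of_natDegree_lt, natDegree_X_pow]
    rw [natDegree_X_pow]; omega
  have hG0 : G ≠ 0 := by
    intro h; rw [h] at hdeg; simp at hdeg
  have heval : ∀ x, G.eval x = (1 - x) * (1 - φ x) * (x + φ x - 1) - d * x * φ x := by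
    intro x; simp [hG, hφ]
  have hder : ∀ x, G.derivative.eval x
      = -(1 - φ x) * (x + φ x - 1) + (1 - x) * (1 - φ x) - d * φ x := by
    intro x; simp [hG, hφ, derivative_X_pow, hqF]
  have hy : ∀ x, G.eval x = 0 → x ≠ 0 ∧ 1 - φ x ≠ 0 := by
    intro x hx
    rw [heval] at hx
    have hx0 : x ≠ 0 := by
      rintro rfl; simp at hx
    refine ⟨hx0, fun h => ?_⟩
    rw [h] at hx
    have : φ x ≠ 0 := by simpa using hx0
    have h3 : d * x * φ x ≠ 0 := by positivity
    apply h3; linear_combination -hx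
  have hfix : ∀ x, G.eval x = 0 → φ (φ x) = x := by
    intro x hx
    obtain ⟨hx0, hy0⟩ := hy x hx
    rw [heval] at hx
    have hx' := congrArg φ hx
    simp only [map_sub, map_mul, map_add, map_one, map_zero, hdφ] at hx'
    by_contra hne
    have hne' := sub_ne_zero.2 hne
    -- Both `x` and `x₂` are roots of one quadratic, with product of the roots `1 - x₁`.
    have key : (1 - φ x) * ((φ (φ x) - x) * (x * φ (φ x) - (1 - φ x))) = 0 := by
      linear_combination φ (φ x) * hx - x * hx'
    have h1 : x * φ (φ x) - (1 - φ x) = 0 := by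
      simpa [hy0, hne'] using key
    exact hno x (sub_eq_zero.1 h1) (sub_eq_zero.1 hx)
  have hcard := card_roots_of_derivative_ne_zero hG0 (by
    intro x hx hdx
    have hf := hfix x hx
    obtain ⟨hx0, hy0⟩ := hy x hx
    rw [heval] at hx
    rw [hder] at hdx
    -- A double root has `x² = 1 - x₁`, so with `x₂ = x` it satisfies the pentagramma relation.
    have key : (1 - φ x) * (x * x - (1 - φ x)) = 0 := by
      linear_combination hx - x * hdx
    have h1 : x * x - (1 - φ x) = 0 := by simpa [hy0] using key
    refine hno x ?_ (sub_eq_zero.1 hx)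
    rw [hf]; exact sub_eq_zero.1 h1)
  have hmem : ∀ x, x ∈ G.roots.toFinset ↔ G.eval x = 0 := by
    intro x; simp [hG0]
  have hle := Finset.card_le_mul_card_image (f := fun x => x + φ x) G.roots.toFinset 2 (by
    intro s hs
    obtain ⟨x, hx, rfl⟩ := Finset.mem_image.1 hs
    rw [hmem] at hx
    refine (Finset.card_le_card (t := {x, φ x}) ?_).trans Finset.card_le_two
    intro z hz
    rw [Finset.mem_filter, hmem] at hz
    obtain ⟨hz, hs⟩ := hz
    rw [heval] at hx hz
    have hne : x + φ x - 1 - d ≠ 0 := by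
      intro h0
      have : d * d = 0 := by
        linear_combination -hx + (x * φ x - (x + φ x - 1) - d) * h0
      simp_all
    have hn : z * φ z = x * φ x := by
      have : (x + φ x - 1 - d) * (z * φ z - x * φ x) = 0 := by
        have e : φ z = x + φ x - z := by linear_combination hs
        rw [e] at hz ⊢
        linear_combination hz - hx
      have := (mul_eq_zero.1 this).resolve_left hne
      exact sub_eq_zero.1 this
    have : (z - x) * (z - φ x) = 0 := by
      have e : φ z = x + φ x - z := by linear_combination hs
      rw [e] at hn
      linear_combination -hn
    rcases mul_eq_zero.1 this with h | h
    · simp [sub_eq_zero.1 h]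
    · simp [sub_eq_zero.1 h])
  have him : (G.roots.toFinset.image fun x => x + φ x).card ≤ q := by
    refine (Finset.card_le_card ?_).trans (card_roots_X_pow_sub_X_le (F := F) hq)
    intro s hs
    obtain ⟨x, hx, rfl⟩ := Finset.mem_image.1 hs
    rw [hmem] at hx
    rw [Multiset.mem_toFinset, mem_roots_X_pow_sub_X hq, ← hφ, map_add, hfix x hx]
    ring
  omega

/-- A solution of the pentagramma relation is fixed by `φ⁵`, and its norm is the parameter `d` of
the biquadratic curve. -/
theorem pentagramma_period {F : Type*} [Field F] (φ : F →+* F) {d u : F}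
    (h : u * φ (φ u) = 1 - φ u)
    (hc : (1 - u) * (1 - φ u) * (u + φ u - 1) = d * u * φ u) :
    u ≠ 0 ∧ φ u * φ (φ (φ (φ u))) = 1 - u ∧ φ (φ (φ (φ (φ u)))) = u ∧
      u * φ u * φ (φ u) * φ (φ (φ u)) * φ (φ (φ (φ u))) = d := by
  have hu : u ≠ 0 := by
    rintro rfl; simp at h
  have h1 := congrArg φ h
  simp only [map_mul, map_sub, map_one] at h1
  have h2 := congrArg φ h1
  simp only [map_mul, map_sub, map_one] at h2
  have hu1 : φ u ≠ 0 := by simpa using hu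
  have hu2 : φ (φ u) ≠ 0 := by simpa using hu1
  have h4 : φ u * φ (φ (φ (φ u))) = 1 - u := by
    apply mul_left_cancel₀ hu2
    linear_combination φ u * h2 - h1 + h
  have h5 := congrArg φ h4
  simp only [map_mul, map_sub, map_one] at h5
  refine ⟨hu, h4, ?_, ?_⟩
  · apply mul_left_cancel₀ hu2
    linear_combination h5 - h
  · apply mul_left_cancel₀ (mul_ne_zero hu hu1)
    generalize φ (φ (φ (φ u))) = u4 at *
    generalize φ (φ (φ u)) = u3 at *
    generalize φ (φ u) = u2 at *
    generalize φ u = u1 at *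
    linear_combination hc + u * u1 * u1 * u3 * u4 * h + u * (1 - u1) * u1 * u3 * h4
      + (1 - u) * (1 - u1) * u * h1 + (- (1 - u) * (1 - u1)) * h

/-- For every nonzero `d` fixed by `φ` there is a pentagonal frieze `α` of norm `1 / d`. -/
theorem exists_frieze {F : Type*} [Field F] [IsAlgClosed F] {q : ℕ} (hq : 1 < q)
    (hqF : (q : F) = 0) (φ : F →+* F) (hφ : ∀ x, φ x = x ^ q) (d : F) (hd : d ≠ 0)
    (hdφ : φ d = d) :
    ∃ α : F, α ≠ 0 ∧ φ (φ (φ (φ (φ α)))) = α ∧ α * φ α = φ (φ (φ α)) + 1 ∧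
      d * (α * φ α * φ (φ α) * φ (φ (φ α)) * φ (φ (φ (φ α)))) = 1 := by
  obtain ⟨u, h, hc⟩ := exists_pentagramma hq hqF φ hφ d hd hdφ
  obtain ⟨hu, h4, h5, hN⟩ := pentagramma_period φ h hc
  have hu1 : φ u ≠ 0 := by simpa using hu
  have hu2 : φ (φ u) ≠ 0 := by simpa using hu1
  have hu3 : φ (φ (φ u)) ≠ 0 := by simpa using hu2
  have hu4 : φ (φ (φ (φ u))) ≠ 0 := by simpa using hu3
  refine ⟨φ (φ u) / (φ u * φ (φ (φ u))), by positivity, ?_, ?_, ?_⟩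
  · simp only [map_div₀, map_mul, h5]
  · simp only [map_div₀, map_mul, h5]
    field_simp
    linear_combination -h4
  · simp only [map_div₀, map_mul, h5]
    rw [← hN]
    field_simp

open Polynomial in
/-- The polynomial `X^(q²) + α X^q + X` has `q²` distinct roots, and at most `q` of them are
multiples of a given one by elements of the `q`-element field. -/
theorem exists_independent_roots {F : Type*} [Field F] [IsAlgClosed F] {q : ℕ} (hq : 1 < q)
    (hqF : (q : F) = 0) (φ : F →+* F) (hφ : ∀ x, φ x = x ^ q) (α : F) :
    ∃ x t : F, x ≠ 0 ∧ t ≠ 0 ∧ φ (φ x) = -α * φ x - x ∧ φ (φ t) = -α * φ t - t ∧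
      ¬∃ c, c ^ q = c ∧ x = c * t := by
  classical
  set L : F[X] := X ^ (q * q) + (C α * X ^ q + X) with hL
  have hqq : q < q * q := by nlinarith
  have hdeg : L.natDegree = q * q := by
    have hR : (C α * X ^ q + X : F[X]).natDegree ≤ q := by
      compute_degree
      omega
    rw [hL, natDegree_add_eq_left_of_natDegree_lt, natDegree_X_pow]
    rw [natDegree_X_pow]; omega
  have hL0 : L ≠ 0 := by
    intro h; rw [h] at hdeg; simp at hdeg; omega
  have hcard := card_roots_of_derivative_ne_zero hL0 (by
    intro x _
    simp [hL, derivative_X_pow, hqF])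
  have hmem : ∀ x, x ∈ L.roots.toFinset ↔ φ (φ x) = -α * φ x - x := by
    intro x
    have : L.eval x = φ (φ x) + α * φ x + x := by
      simp [hL, hφ, ← pow_mul, add_assoc]
    rw [Multiset.mem_toFinset, mem_roots hL0, IsRoot.def, this]
    constructor <;> intro h <;> linear_combination h
  obtain ⟨t, ht, ht0⟩ := Finset.exists_mem_ne (s := L.roots.toFinset) (by omega) 0
  have hlt : (((X ^ q - X : F[X]).roots.toFinset.image fun c => c * t)).card
      < L.roots.toFinset.card :=
    (Finset.card_image_le.trans (card_roots_X_pow_sub_X_le hq)).trans_lt (by omega)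
  obtain ⟨x, hx, hxn⟩ := Finset.exists_mem_notMem_of_card_lt_card hlt
  have hxc : ¬∃ c, c ^ q = c ∧ x = c * t := by
    rintro ⟨c, hc, rfl⟩
    apply hxn
    refine Finset.mem_image.2 ⟨c, ?_, rfl⟩
    rw [Multiset.mem_toFinset, mem_roots_X_pow_sub_X hq]
    exact hc
  refine ⟨x, t, ?_, ht0, (hmem x).1 hx, (hmem t).1 ht, hxc⟩
  rintro rfl
  exact hxc ⟨0, by simp; omega, by simp⟩

/-- The recurrence attached to a pentagonal frieze `α` is periodic of period five. -/
theorem frieze_period {F : Type*} [Field F] (φ : F →+* F) {α z : F}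
    (h5 : φ (φ (φ (φ (φ α)))) = α) (hf : α * φ α = φ (φ (φ α)) + 1)
    (hz : φ (φ z) = -α * φ z - z) : φ (φ (φ (φ (φ z)))) = z := by
  have f1 := congrArg φ hf
  simp only [map_mul, map_add, map_one] at f1
  have f2 := congrArg φ f1
  simp only [map_mul, map_add, map_one, h5] at f2
  have f3 := congrArg φ f2
  simp only [map_mul, map_add, map_one] at f3
  have f4 := congrArg φ f3
  simp only [map_mul, map_add, map_one, h5] at f4
  have h3 : φ (φ (φ z)) = φ (φ (φ α)) * φ z + φ α * z := by
    rw [hz]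
    simp only [map_mul, map_sub, map_neg]
    rw [hz]
    linear_combination φ z * hf
  have h4 : φ (φ (φ (φ z))) = -φ z - φ (φ (φ (φ α))) * z := by
    rw [h3]
    simp only [map_mul, map_add]
    rw [hz]
    linear_combination (-φ z) * f4
  rw [h4]
  simp only [map_mul, map_sub, map_neg, h5]
  rw [hz]
  ring

/-- The failure of scatteredness, stated inside an algebraically closed field: the condition
`φ⁵ x = x` says that `x` lies in the field with `q ^ 5` elements. -/
theorem exists_not_scattered_s7 {F : Type*} [Field F] [IsAlgClosed F] {q : ℕ} (hq : 1 < q)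
    (hqF : (q : F) = 0) (φ : F →+* F) (hφ : ∀ x, φ x = x ^ q) (b : F) (hb : b ≠ 0)
    (hb5 : φ (φ (φ (φ (φ b)))) = b) :
    ∃ x t : F, x ≠ 0 ∧ t ≠ 0 ∧ φ (φ (φ (φ (φ x)))) = x ∧ φ (φ (φ (φ (φ t)))) = t ∧
      x * (φ t + b * φ (φ t)) = t * (φ x + b * φ (φ x)) ∧ ¬∃ c, c ^ q = c ∧ x = c * t := by
  have hb1 : φ b ≠ 0 := by simpa using hb
  have hb2 : φ (φ b) ≠ 0 := by simpa using hb1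
  have hb3 : φ (φ (φ b)) ≠ 0 := by simpa using hb2
  have hb4 : φ (φ (φ (φ b))) ≠ 0 := by simpa using hb3
  obtain ⟨α, hα, h5, hf, hN⟩ := exists_frieze hq hqF φ hφ
    (b * φ b * φ (φ b) * φ (φ (φ b)) * φ (φ (φ (φ b)))) (by positivity) (by
      simp only [map_mul, hb5]; ring)
  obtain ⟨x, t, hx, ht, hxr, htr, hxt⟩ := exists_independent_roots hq hqF φ hφ α
  -- Hilbert 90 for `b α`, which has norm one.
  obtain ⟨w, hw⟩ := IsAlgClosed.exists_pow_nat_eq (b * α) (show 0 < q - 1 by omega)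
  have hw0 : w ≠ 0 := by
    rintro rfl
    rw [zero_pow (by omega)] at hw
    exact mul_ne_zero hb hα hw.symm
  have hw1 : φ w = b * α * w := by
    rw [hφ, ← hw, ← pow_succ, Nat.sub_add_cancel hq.le]
  have hw5 : φ (φ (φ (φ (φ w)))) = w := by
    simp only [hw1, map_mul]
    linear_combination w * hN
  -- The scaling factor `l` is the conjugate of `w⁻¹` with `l₁ = w⁻¹`.
  obtain ⟨l, hl⟩ : ∃ l, l = (φ (φ (φ (φ w))))⁻¹ := ⟨_, rfl⟩
  have hl0 : l ≠ 0 := by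
    rw [hl]; simpa using hw0
  have hl1 : φ l = w⁻¹ := by rw [hl, map_inv₀, hw5]
  have hl5 : φ (φ (φ (φ (φ l)))) = l := by
    rw [hl]; simp only [map_inv₀, hw5]
  have hl2 : φ l = b * α * φ (φ l) := by
    rw [hl1, map_inv₀, hw1]
    field_simp
  refine ⟨l * x, l * t, by positivity, by positivity, ?_, ?_, ?_, ?_⟩
  · simp only [map_mul, hl5, frieze_period φ h5 hf hxr]
  · simp only [map_mul, hl5, frieze_period φ h5 hf htr]
  · simp only [map_mul, hxr, htr]
    linear_combination (l * x * φ t - l * t * φ x) * hl2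
  · rintro ⟨c, hc, hc'⟩
    refine hxt ⟨c, hc, mul_left_cancel₀ hl0 ?_⟩
    rw [hc']; ring

open Polynomial in
theorem exists_algebraMap_eq_of_pow_card {K F : Type*} [Field K] [Fintype K] [Field F]
    [Algebra K F] {x : F} (hx : x ^ Fintype.card K = x) : ∃ y : K, algebraMap K F y = x := by
  have hr := FiniteField.roots_X_pow_card_sub_X K
  have hs : (X ^ Fintype.card K - X : K[X]).Splits := by
    rw [splits_iff_card_roots, hr,
      FiniteField.X_pow_card_sub_X_natDegree_eq K Fintype.one_lt_card]
    simp
  have hm : x ∈ ((X ^ Fintype.card K - X : K[X]).map (algebraMap K F)).roots := by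
    rw [Polynomial.map_sub, Polynomial.map_pow, map_X]
    exact (mem_roots_X_pow_sub_X Fintype.one_lt_card x).2 hx
  rw [hs.roots_map] at hm
  obtain ⟨y, _, hy⟩ := Multiset.mem_map.1 hm
  exact ⟨y, hy⟩

/-- For `n = 5` and `b ≠ 0`, the `q`-polynomial `x^q + b x^(q²)` is not
scattered. -/
theorem stmt_7 (q : ℕ) (hq : IsPrimePow q) (K : Type*) [Field K] [Fintype K]
    (hK : Fintype.card K = q ^ 5) (b : K) (hb : b ≠ 0) :
    ∃ x t : K, x ≠ 0 ∧ t ≠ 0 ∧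
      x * (t ^ q + b * t ^ (q ^ 2)) = t * (x ^ q + b * x ^ (q ^ 2)) ∧
      ¬∃ c : K, c ^ q = c ∧ x = c * t := by
  have hq1 := hq.one_lt
  obtain ⟨p, k, hp, hk, rfl⟩ := hq
  have : Fact p.Prime := ⟨hp.nat_prime⟩
  have hcp : CharP K p := charP_of_card_eq_prime_pow (f := k * 5) (by
    rw [hK, pow_mul])
  set F := AlgebraicClosure K
  have : CharP F p := charP_of_injective_algebraMap (algebraMap K F).injective p
  obtain ⟨φ, hφ⟩ : ∃ φ : F →+* F, ∀ x, φ x = x ^ p ^ k :=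
    ⟨iterateFrobenius F p k, iterateFrobenius_def p k⟩
  have hqF : ((p ^ k : ℕ) : F) = 0 := by
    rw [Nat.cast_pow, CharP.cast_eq_zero, zero_pow hk.ne']
  have h5 : ∀ x, φ (φ (φ (φ (φ x)))) = x ^ Fintype.card K := by
    intro x
    simp only [hφ, hK, ← pow_mul]
    congr 1; ring
  obtain ⟨x, t, hx, ht, hx5, ht5, h, hc⟩ := exists_not_scattered_s7 hq1 hqF φ hφ
    (algebraMap K F b) (by simpa using hb) (by rw [h5, ← map_pow, FiniteField.pow_card])
  rw [h5] at hx5 ht5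
  obtain ⟨x, rfl⟩ := exists_algebraMap_eq_of_pow_card hx5
  obtain ⟨t, rfl⟩ := exists_algebraMap_eq_of_pow_card ht5
  refine ⟨x, t, by simpa using hx, by simpa using ht, ?_, ?_⟩
  · apply (algebraMap K F).injective
    simp only [hφ, ← pow_mul, ← sq] at h
    simpa only [map_mul, map_add, map_pow, ← pow_mul] using h
  · rintro ⟨c, hc1, rfl⟩
    exact hc ⟨algebraMap K F c, by rw [← map_pow, hc1], by rw [map_mul]⟩
end
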